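/- Let R be a polynomial ring over an algebraically closed field K. Let I be an ideal generated by n ≥ 3 quadrics represented by minors by the 2×(n+1) matrix M = [[x, 0, 0, a_{13}, …, a_{1n}], [y, a_{21}, a_{22}, a_{23}, …, a_{2n}]], where all entries are linear forms or zero and x, y are linearly independent linear forms with ht(x, y) = 2. Then pd(R/I) ≤ 2n − 2. -/

import Mathlib

open MvPolynomial Filter

universe u

/-- `PdLE R n M` means the `R`-module `M` has projective dimension at most `n`:
either `M` is projective (`n = 0`), or `M` is a quotient of a free module by a
submodule of projective dimension at most `n - 1`. -/
def PdLE (R : Type u) [CommRing R] : ℕ → (M : Type u) → [AddCommGroup M] → [Module R M] → Prop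
  | 0, M, _, _ => Module.Projective R M
  | n + 1, M, _, _ => ∃ (F : Type u) (_ : AddCommGroup F) (_ : Module R F),
      Module.Free R F ∧ ∃ f : F →ₗ[R] M, Function.Surjective f ∧ PdLE R n (LinearMap.ker f)

/-- The projective dimension of an `R`-module `M`, as an element of `ℕ∞`
(`⊤` if `M` has no finite free resolution). -/
noncomputable def projDim (R : Type u) [CommRing R] (M : Type u) [AddCommGroup M]
    [Module R M] : ℕ∞ :=
  sInf ((fun n : ℕ => (n : ℕ∞)) '' {n : ℕ | PdLE R n M})

/-- The height of an ideal: the infimum of the heights of the prime ideals containing it. -/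
noncomputable def idealHeight {R : Type*} [CommRing R] (I : Ideal R) : ℕ∞ :=
  ⨅ p ∈ {p : PrimeSpectrum R | I ≤ p.asIdeal}, Order.height p

/-- The length of a module, defined as the Krull dimension of its lattice of submodules. -/
noncomputable def moduleLength (R : Type u) [CommRing R] (M : Type u) [AddCommGroup M]
    [Module R M] : WithBot ℕ∞ :=
  Order.krullDim (Submodule R M)

/-- `IsHSMultiplicity R mx I e` asserts that the Hilbert–Samuel multiplicity of `R/I`
with respect to the ideal `mx` equals `e`: for `d = dim R/I` there is a polynomial `P`
of degree `d` with `e = d! · (leading coefficient of P)` such that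
`length (R/(I + mx^n)) = P(n)` for all large `n`. -/
def IsHSMultiplicity (R : Type u) [CommRing R] (mx I : Ideal R) (e : ℕ) : Prop :=
  ∃ (d : ℕ) (P : Polynomial ℚ),
    ringKrullDim (R ⧸ I) = (d : WithBot ℕ∞) ∧
    P.natDegree = d ∧
    (e : ℚ) = P.leadingCoeff * d.factorial ∧
    ∀ᶠ n : ℕ in Filter.atTop, ∃ k : ℕ, (k : ℚ) = P.eval (n : ℚ) ∧
      moduleLength R (R ⧸ (I ⊔ mx ^ n)) = ((k : ℕ∞) : WithBot ℕ∞)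

/-- A matrix over a `K`-algebra is `1`-generic if it has no generalized zero entry:
for every nonzero vectors `u`, `v` of scalars, `uᵀ M v ≠ 0`. -/
def OneGeneric (K : Type*) [Field K] {R : Type u} [CommRing R] [Algebra K R]
    {m l : ℕ} (M : Matrix (Fin m) (Fin l) R) : Prop :=
  ∀ (u : Fin m → K) (v : Fin l → K), u ≠ 0 → v ≠ 0 →
    ∑ i, ∑ j, algebraMap K R (u i * v j) * M i j ≠ 0

/-- The ideal of all `2 × 2` minors of a `2 × l` matrix. -/
def minors2 {R : Type u} [CommRing R] {l : ℕ} (M : Matrix (Fin 2) (Fin l) R) : Ideal R :=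
  Ideal.span (Set.range fun p : Fin l × Fin l => M 0 p.1 * M 1 p.2 - M 0 p.2 * M 1 p.1)

/-- The homogeneous maximal ideal of a polynomial ring. -/
noncomputable def maxIdeal (K : Type*) [Field K] (σ : Type*) : Ideal (MvPolynomial σ K) :=
  Ideal.span (Set.range (X : σ → MvPolynomial σ K))

/-- The ideal represented by minors by the `2 × (n+1)` matrix with first column `(x, y)ᵀ`
and remaining columns `(u j, v j)ᵀ`: it is generated by the `2 × 2` minors involving
the first column. -/
def repByMinors {R : Type u} [CommRing R] {n : ℕ} (x y : R) (u v : Fin n → R) : Ideal R :=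
  Ideal.span (Set.range fun j : Fin n => x * v j - y * u j)

/-
The minors involving the first column `(x, y)` are the values of `h (a, b) = x b - y a` on the
other columns. Since `x, y` is a regular sequence, the kernel of `h` on the column space `W ⊆ R²`
is the free module on `(x, y)`, so a bound on the projective dimension of the cokernel `R² / W`
passes to `R / I`. It remains to bound `pd (R² / W) ≤ 2n - 2`, where `W` is spanned by the `n - 1`
columns `(x, y), (a₁₃, a₂₃), …, (a₁ₙ, a₂ₙ)` and by `(0, a₂₁), (0, a₂₂)`.

All of this is defined over the polynomial ring on a basis of the span of the entries, so Hilbert's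
syzygy theorem bounds the projective dimension by the number of independent entries. A column
`(a, t)` with a new variable `t` in the second row can be cheaper: if `Ann e₁ ⊆ Ann e₂` and `a` is
regular modulo `Ann e₁` (for instance a new variable), then the torsion ideal of the new column is
`Ann e₁`, and `R / Ann e₁` embeds into the cokernel. Hence the column raises the projective
dimension by at most one, provided that it was at least the global dimension minus one. If all
`2n` entries are independent, two such columns with independent entries save two. Otherwise row and
column operations bring a linear relation between the entries to a normal form with fewer
independent entries, in which one such column saves what is left.
-/

section ProjectiveDimension

open CategoryTheory TensorProduct

/-- The `R`-module `M` has projective dimension at most `n` in the sense of Mathlib, i.e. by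
vanishing of `Ext`; this version comes with the long exact sequences used to compare the
projective dimensions in a short exact sequence. -/
def HasPdLE (R : Type u) [CommRing R] (M : Type u) [AddCommGroup M] [Module R M] (n : ℕ) : Prop :=
  HasProjectiveDimensionLE (ModuleCat.of R M) n

/-- The global dimension of `R` is at most `n`: every `R`-module (in the universe of `R`) has
projective dimension at most `n`. -/
def GlobalDimLE (R : Type u) [CommRing R] (n : ℕ) : Prop :=
  ∀ (M : Type u) [AddCommGroup M] [Module R M], HasPdLE R M n

theorem exact_baseChange {R M M' M'' : Type*} [CommRing R] [AddCommGroup M] [Module R M]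
    [AddCommGroup M'] [Module R M'] [AddCommGroup M''] [Module R M''] (T : Type*) [CommRing T]
    [Algebra R T] {f : M' →ₗ[R] M} {g : M →ₗ[R] M''} (hfg : Function.Exact f g)
    (hg : Function.Surjective g) : Function.Exact (f.baseChange T) (g.baseChange T) :=
  lTensor_exact T hfg hg

namespace HasPdLE

variable {R : Type u} [CommRing R] {M M' M'' : Type u} [AddCommGroup M] [Module R M]
  [AddCommGroup M'] [Module R M'] [AddCommGroup M''] [Module R M''] {n k : ℕ}

theorem congr (e : M ≃ₗ[R] M') (h : HasPdLE R M n) : HasPdLE R M' n :=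
  have : HasProjectiveDimensionLT (ModuleCat.of R M) (n + 1) := h
  hasProjectiveDimensionLT_of_iso e.toModuleIso (n + 1)

theorem mono (h : HasPdLE R M n) (hk : n ≤ k) : HasPdLE R M k :=
  have : HasProjectiveDimensionLT (ModuleCat.of R M) (n + 1) := h
  hasProjectiveDimensionLT_of_ge _ (n + 1) (k + 1) (by omega)

theorem zero_iff : HasPdLE R M 0 ↔ Module.Projective R M :=
  (projective_iff_hasProjectiveDimensionLE_zero _).symm.trans
    (IsProjective.iff_projective M).symm

theorem of_projective (n : ℕ) [Module.Projective R M] : HasPdLE R M n :=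
  (zero_iff.2 inferInstance).mono n.zero_le

section Exact

variable {f : M' →ₗ[R] M} {g : M →ₗ[R] M''} (hf : Function.Injective f)
  (hfg : Function.Exact f g) (hg : Function.Surjective g)
include hf hfg hg

theorem right_of_exact (h' : HasPdLE R M' n) (h : HasPdLE R M (n + 1)) : HasPdLE R M'' (n + 1) :=
  (ModuleCat.shortComplex_shortExact
    (ShortComplex.mk (ModuleCat.ofHom f) (ModuleCat.ofHom g)
      (by ext x; exact hfg.apply_apply_eq_zero x)) hfg hf hg).hasProjectiveDimensionLT_X₃
    (n + 1) h' h

theorem left_of_exact (h : HasPdLE R M n) (h'' : HasPdLE R M'' (n + 1)) : HasPdLE R M' n :=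
  (ModuleCat.shortComplex_shortExact
    (ShortComplex.mk (ModuleCat.ofHom f) (ModuleCat.ofHom g)
      (by ext x; exact hfg.apply_apply_eq_zero x)) hfg hf hg).hasProjectiveDimensionLT_X₁
    (n + 1) h h''

end Exact

theorem quotient {N : Submodule R M} (hN : HasPdLE R N n) (h : HasPdLE R M (n + 1)) :
    HasPdLE R (M ⧸ N) (n + 1) :=
  right_of_exact N.injective_subtype (LinearMap.exact_subtype_mkQ N) N.mkQ_surjective hN h

theorem of_quotient {N : Submodule R M} (h : HasPdLE R M n) (hN : HasPdLE R (M ⧸ N) (n + 1)) :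
    HasPdLE R N n :=
  left_of_exact N.injective_subtype (LinearMap.exact_subtype_mkQ N) N.mkQ_surjective h hN

theorem ker {f : M →ₗ[R] M'} (hf : Function.Surjective f) (h : HasPdLE R M n)
    (h' : HasPdLE R M' (n + 1)) : HasPdLE R (LinearMap.ker f) n :=
  left_of_exact (Submodule.injective_subtype _) (LinearMap.exact_subtype_ker_map f) hf h h'

theorem range {f : M →ₗ[R] M'} (hf : HasPdLE R (LinearMap.ker f) n)
    (h : HasPdLE R M (n + 1)) : HasPdLE R (LinearMap.range f) (n + 1) :=
  (quotient hf h).congr f.quotKerEquivRange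

theorem pdLE (h : HasPdLE R M n) : PdLE R n M := by
  induction n generalizing M with
  | zero => exact zero_iff.1 h
  | succ n ih =>
    have hsurj := Finsupp.linearCombination_id_surjective R M
    exact ⟨M →₀ R, inferInstance, inferInstance, inferInstance, _, hsurj,
      ih (ker hsurj (of_projective n) h)⟩

theorem projDim_le (h : HasPdLE R M n) : projDim R M ≤ n :=
  sInf_le ⟨n, h.pdLE, rfl⟩

theorem baseChange (T : Type u) [CommRing T] [Algebra R T] [Module.Flat R T]
    (h : HasPdLE R M n) : HasPdLE T (T ⊗[R] M) n := by
  induction n generalizing M with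
  | zero =>
    have := zero_iff.1 h
    exact of_projective 0
  | succ n ih =>
    let g : (M →₀ R) →ₗ[R] M := Finsupp.linearCombination R id
    have hg : Function.Surjective g := Finsupp.linearCombination_id_surjective R M
    exact right_of_exact
      (Module.Flat.lTensor_preserves_injective_linearMap _ (Submodule.injective_subtype _))
      (exact_baseChange T (LinearMap.exact_subtype_ker_map g) hg)
      (LinearMap.lTensor_surjective T hg) (ih (ker hg (of_projective n) h)) (of_projective _)

theorem of_isBaseChange {T : Type u} [CommRing T] [Algebra R T] [Module.Flat R T]
    {N : Type u} [AddCommGroup N] [Module R N] [Module T N] [IsScalarTower R T N]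
    {f : M →ₗ[R] N} (hf : IsBaseChange T f) (h : HasPdLE R M n) : HasPdLE T N n :=
  (h.baseChange T).congr hf.equiv

end HasPdLE

theorem exact_linearCombination_mkQ_span {R M : Type*} [CommRing R] [AddCommGroup M] [Module R M]
    (s : Set M) : Function.Exact (Finsupp.linearCombination R ((↑) : s → M))
      (Submodule.span R s).mkQ := by
  rw [LinearMap.exact_iff, Submodule.ker_mkQ, Finsupp.range_linearCombination, Subtype.range_coe]

theorem isBaseChange_quotient_span_image {R T M N : Type*} [CommRing R] [CommRing T] [Algebra R T]
    [AddCommGroup M] [Module R M] [AddCommGroup N] [Module R N] [Module T N] [IsScalarTower R T N]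
    {f : M →ₗ[R] N} (hf : IsBaseChange T f) (s : Set M) :
    ∃ g : (M ⧸ Submodule.span R s) →ₗ[R] (N ⧸ Submodule.span T (f '' s)), IsBaseChange T g := by
  let v : s → N := fun x => f x
  have hv : Function.Exact (Finsupp.linearCombination T v) (Submodule.span T (f '' s)).mkQ := by
    rw [LinearMap.exact_iff, Submodule.ker_mkQ, Finsupp.range_linearCombination, Set.image_eq_range]
  let q : N →ₗ[R] N ⧸ Submodule.span T (f '' s) := (Submodule.mkQ _).restrictScalars R
  have hle : Submodule.span R s ≤ LinearMap.ker (q ∘ₗ f) :=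
    Submodule.span_le.2 fun x hx => (Submodule.Quotient.mk_eq_zero _).2
      (Submodule.subset_span (Set.mem_image_of_mem f hx))
  refine ⟨Submodule.liftQ _ (q ∘ₗ f) hle, IsBaseChange.of_right_exact T
    (Finsupp.mapRange.linearMap (Algebra.linearMap R T)) f _ ?_ (Submodule.liftQ_mkQ _ _ hle)
    (IsBaseChange.finsuppPow s (IsBaseChange.linearMap R T)) hf
    (exact_linearCombination_mkQ_span s) (Submodule.mkQ_surjective _) hv
    (Submodule.mkQ_surjective _)⟩
  ext x
  simp [v]

theorem HasPdLE.quotient_span_image {R T M N : Type u} [CommRing R] [CommRing T] [Algebra R T]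
    [Module.Flat R T] [AddCommGroup M] [Module R M] [AddCommGroup N] [Module R N] [Module T N]
    [IsScalarTower R T N] {f : M →ₗ[R] N} (hf : IsBaseChange T f) {s : Set M} {n : ℕ}
    (h : HasPdLE R (M ⧸ Submodule.span R s) n) : HasPdLE T (N ⧸ Submodule.span T (f '' s)) n :=
  have ⟨_, hg⟩ := isBaseChange_quotient_span_image hf s
  h.of_isBaseChange hg

theorem GlobalDimLE.mono {R : Type u} [CommRing R] {n k : ℕ} (h : GlobalDimLE R n) (hk : n ≤ k) :
    GlobalDimLE R k :=
  fun M _ _ => (h M).mono hk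

attribute [local instance] RingHomInvPair.of_ringEquiv in
theorem GlobalDimLE.of_ringEquiv {R T : Type u} [CommRing R] [CommRing T] (e : R ≃+* T) {n : ℕ}
    (h : GlobalDimLE R n) : GlobalDimLE T n := by
  intro M _ _
  let _ : Module R M := Module.compHom M (e : R →+* T)
  let e' : M ≃ₛₗ[RingHomClass.toRingHom e] M := { AddEquiv.refl M with map_smul' := fun _ _ => rfl }
  have : HasProjectiveDimensionLE (ModuleCat.of R M) n := h M
  exact ModuleCat.hasProjectiveDimensionLE_of_semiLinearEquiv e (M := ModuleCat.of R M)
    (N := ModuleCat.of T M) e' n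

end ProjectiveDimension

section HilbertSyzygy

open scoped Polynomial TensorProduct
open TensorProduct (smul_tmul smul_tmul' tmul_add add_tmul)

namespace KoszulX

section Coefficients

variable (S V : Type u) [CommRing S] [AddCommGroup V] [Module S V]

/-- The coefficients of an element of `S[X] ⊗ V`, regarded as a polynomial with coefficients
in `V`. -/
noncomputable def coeffEquiv : S[X] ⊗[S] V ≃+ (ℕ →₀ V) :=
  (PolynomialModule.polynomialTensorProductLEquivPolynomialModule S V).toAddEquiv.trans
    PolynomialModule.coeffAddEquiv

variable {S V} in
@[simp]
theorem coeffEquiv_tmul (p : S[X]) (v : V) (n : ℕ) :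
    coeffEquiv S V (p ⊗ₜ v) n = p.coeff n • v := by
  have h : PolynomialModule.polynomialTensorProductLEquivPolynomialModule S V (p ⊗ₜ v) =
      p • PolynomialModule.single S 0 v := by
    simp only [PolynomialModule.polynomialTensorProductLEquivPolynomialModule]
    rfl
  simp [coeffEquiv, h, PolynomialModule.smul_single_apply]

end Coefficients

variable (S V : Type u) [CommRing S] [AddCommGroup V] [Module S V] [Module S[X] V]
  [IsScalarTower S S[X] V]

/-- The augmentation of the Koszul resolution `0 → S[X] ⊗ V → S[X] ⊗ V → V → 0` of an
`S[X]`-module `V`. -/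
noncomputable def augmentation : S[X] ⊗[S] V →ₗ[S[X]] V :=
  LinearMap.liftBaseChange S[X] LinearMap.id

/-- The differential `X ⊗ 1 - 1 ⊗ X` of the Koszul resolution
`0 → S[X] ⊗ V → S[X] ⊗ V → V → 0` of an `S[X]`-module `V`. -/
noncomputable def differential : S[X] ⊗[S] V →ₗ[S[X]] S[X] ⊗[S] V :=
  LinearMap.lsmul S[X] _ Polynomial.X -
    ((LinearMap.lsmul S[X] V Polynomial.X).restrictScalars S : V →ₗ[S] V).baseChange S[X]

variable {S V}

@[simp]
theorem augmentation_tmul (p : S[X]) (v : V) : augmentation S V (p ⊗ₜ v) = p • v := by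
  simp [augmentation]

@[simp]
theorem differential_tmul (p : S[X]) (v : V) :
    differential S V (p ⊗ₜ v) = (p * Polynomial.X) ⊗ₜ v - p ⊗ₜ ((.X : S[X]) • v) := by
  simp [differential, smul_tmul', mul_comm]

theorem augmentation_surjective : Function.Surjective (augmentation S V) :=
  fun v => ⟨1 ⊗ₜ v, by simp⟩

theorem coeffEquiv_differential (t : S[X] ⊗[S] V) (n : ℕ) :
    coeffEquiv S V (differential S V t) (n + 1) =
      coeffEquiv S V t n - (.X : S[X]) • coeffEquiv S V t (n + 1) := by
  induction t with
  | zero => simp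
  | add t t' ht ht' =>
    simp only [map_add, Finsupp.add_apply, ht, ht', smul_add]
    abel
  | tmul p v => simp [smul_comm (.X : S[X])]

theorem differential_injective : Function.Injective (differential S V) := by
  rw [injective_iff_map_eq_zero]
  intro t ht
  by_contra h0
  have hne : (coeffEquiv S V t).support.Nonempty := by simpa using h0
  obtain ⟨m, hm, hmax⟩ := (coeffEquiv S V t).support.exists_max_image id hne
  have hlast : coeffEquiv S V t (m + 1) = 0 :=
    Finsupp.notMem_support_iff.1 fun h => (Nat.lt_succ_self m).not_ge (hmax _ h)
  have hcoeff := coeffEquiv_differential t m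
  rw [ht, hlast, smul_zero, sub_zero, map_zero] at hcoeff
  exact Finsupp.mem_support_iff.1 hm hcoeff.symm

theorem sub_one_tmul_augmentation_mem_range (t : S[X] ⊗[S] V) :
    t - 1 ⊗ₜ augmentation S V t ∈ LinearMap.range (differential S V) := by
  induction t with
  | zero => simp
  | add t t' ht ht' =>
    convert add_mem ht ht' using 1
    rw [map_add, tmul_add]
    abel
  | tmul p v =>
    rw [augmentation_tmul]
    induction p using Polynomial.induction_on generalizing v with
    | C a =>
      simp only [Polynomial.C_eq_algebraMap, Algebra.algebraMap_eq_smul_one, smul_assoc, one_smul,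
        smul_tmul, sub_self, Submodule.zero_mem]
    | add p q hp hq =>
      convert add_mem (hp v) (hq v) using 1
      rw [add_smul, tmul_add, add_tmul]
      abel
    | monomial n a ih =>
      have hstep := add_mem (LinearMap.mem_range_self (differential S V)
        ((Polynomial.C a * Polynomial.X ^ n) ⊗ₜ v)) (ih ((.X : S[X]) • v))
      rwa [differential_tmul, sub_add_sub_cancel, smul_smul, mul_assoc, ← pow_succ] at hstep

theorem exact_differential_augmentation :
    Function.Exact (differential S V) (augmentation S V) := by
  refine fun t => ⟨fun ht => ?_, ?_⟩
  · simpa [ht] using sub_one_tmul_augmentation_mem_range t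
  · rintro ⟨t, rfl⟩
    induction t with
    | zero => simp
    | add t t' ht ht' => simp only [map_add, ht, ht', add_zero]
    | tmul p v => simp [smul_smul]

end KoszulX

theorem GlobalDimLE.polynomial {S : Type u} [CommRing S] {n : ℕ} (h : GlobalDimLE S n) :
    GlobalDimLE S[X] (n + 1) := by
  intro V _ _
  let _ : Module S V := Module.compHom V (Polynomial.C : S →+* S[X])
  have : IsScalarTower S S[X] V :=
    ⟨fun a p v => by rw [Polynomial.smul_eq_C_mul, mul_smul]; rfl⟩
  have hbase : HasPdLE S[X] (S[X] ⊗[S] V) n := (h V).baseChange S[X]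
  exact .right_of_exact KoszulX.differential_injective KoszulX.exact_differential_augmentation
    KoszulX.augmentation_surjective hbase (hbase.mono n.le_succ)

theorem globalDimLE_of_field (K : Type u) [Field K] : GlobalDimLE K 0 :=
  fun _ _ _ => .of_projective 0

theorem globalDimLE_mvPolynomial (K : Type u) [Field K] (d : ℕ) :
    GlobalDimLE (MvPolynomial (Fin d) K) d := by
  induction d with
  | zero => exact (globalDimLE_of_field K).of_ringEquiv (isEmptyRingEquiv K (Fin 0)).symm
  | succ d ih => exact ih.polynomial.of_ringEquiv (finSuccEquiv K d).symm.toRingEquiv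

end HilbertSyzygy

section TwoRowMatrices

open Submodule (span)
open scoped Polynomial

/-- The cokernel of a matrix with two rows over `S`, encoded by its set `s` of columns. -/
abbrev Coker {S : Type u} [CommRing S] (s : Set (S × S)) : Type u := (S × S) ⧸ span S s

/-- The annihilator of the class of the first basis vector in the cokernel of the matrix with
columns `s`. -/
def annFst {S : Type u} [CommRing S] (s : Set (S × S)) : Ideal S :=
  Ideal.torsionOf S (Coker s) (Submodule.Quotient.mk (1, 0))

/-- The annihilator of the class of the second basis vector in the cokernel of the matrix with
columns `s`. -/
def annSnd {S : Type u} [CommRing S] (s : Set (S × S)) : Ideal S :=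
  Ideal.torsionOf S (Coker s) (Submodule.Quotient.mk (0, 1))

section CommRing

variable {S R : Type u} [CommRing S] [CommRing R] {s : Set (S × S)} {n : ℕ}

theorem mem_torsionOf_mk {M : Type u} [AddCommGroup M] [Module S M] {N : Submodule S M} {c : M}
    {r : S} : r ∈ Ideal.torsionOf S (M ⧸ N) (Submodule.Quotient.mk c) ↔ r • c ∈ N := by
  rw [Ideal.mem_torsionOf_iff, ← Submodule.Quotient.mk_smul, Submodule.Quotient.mk_eq_zero]

theorem mem_annFst {r : S} : r ∈ annFst s ↔ (r, 0) ∈ span S s := by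
  rw [annFst, mem_torsionOf_mk, Prod.smul_mk, smul_zero, smul_eq_mul, mul_one]

theorem mem_annSnd {r : S} : r ∈ annSnd s ↔ (0, r) ∈ span S s := by
  rw [annSnd, mem_torsionOf_mk, Prod.smul_mk, smul_zero, smul_eq_mul, mul_one]

theorem HasPdLE.quotient_torsionOf {M : Type u} [AddCommGroup M] [Module S M]
    (hS : GlobalDimLE S (n + 1)) (h : HasPdLE S M n) (c : M) :
    HasPdLE S (S ⧸ Ideal.torsionOf S M c) n :=
  (h.of_quotient (hS _)).congr (Ideal.quotTorsionOfEquivSpanSingleton S M c).symm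

theorem HasPdLE.quotient_annFst (hS : GlobalDimLE S (n + 1)) (h : HasPdLE S (Coker s) n) :
    HasPdLE S (S ⧸ annFst s) n :=
  h.quotient_torsionOf hS _

theorem HasPdLE.coker_insert {c : S × S}
    (hc : HasPdLE S (S ⧸ Ideal.torsionOf S (Coker s) (Submodule.Quotient.mk c)) n)
    (h : HasPdLE S (Coker s) (n + 1)) : HasPdLE S (Coker (insert c s)) (n + 1) := by
  have hspan : HasPdLE S ((S ∙ c).map (span S s).mkQ) n := by
    rw [Submodule.map_span, Set.image_singleton]
    exact hc.congr (Ideal.quotTorsionOfEquivSpanSingleton S (Coker s) _)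
  refine (hspan.quotient h).congr ?_
  exact (Submodule.quotientQuotientEquivQuotientSup _ _).trans
    (Submodule.quotEquivOfEq _ _ (by rw [Submodule.span_insert, sup_comm]))

theorem HasPdLE.coker_image {φ : S →+* R} (hφ : φ.Flat) (h : HasPdLE S (Coker s) n) :
    HasPdLE R (Coker (Prod.map φ φ '' s)) n := by
  algebraize [φ]
  exact h.quotient_span_image
    (.prodMap _ _ (IsBaseChange.linearMap S R) (IsBaseChange.linearMap S R))

theorem HasPdLE.quotient_map {φ : S →+* R} (hφ : φ.Flat) {I : Ideal S} (h : HasPdLE S (S ⧸ I) n) :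
    HasPdLE R (R ⧸ I.map φ) n := by
  algebraize [φ]
  exact (h.baseChange R).congr
    (Algebra.TensorProduct.quotIdealMapEquivTensorQuot R I).symm.toLinearEquiv

theorem span_image_prodMap (φ : S →+* R) {w : S × S} (h : w ∈ span S s) :
    Prod.map φ φ w ∈ span R (Prod.map φ φ '' s) := by
  algebraize [φ]
  have hmap := Submodule.mem_map_of_mem
    (f := (Algebra.linearMap S R).prodMap (Algebra.linearMap S R)) h
  rw [Submodule.map_span] at hmap
  exact Submodule.span_subset_span S R _ hmap

end CommRing

section AdjoinVariable

variable {S : Type u} [CommRing S]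

/-- The columns `s`, read as columns over `S[X]`. -/
abbrev constCols (s : Set (S × S)) : Set (S[X] × S[X]) :=
  Prod.map (Polynomial.C : S →+* S[X]) (Polynomial.C : S →+* S[X]) '' s

/-- The columns `s`, read over `S[X]`, together with a column whose first entry `a` is in `S` and
whose second entry is the new variable. -/
abbrev adjoinCol (s : Set (S × S)) (a : S) : Set (S[X] × S[X]) :=
  insert (Polynomial.C a, .X) (constCols s)

variable {s : Set (S × S)} {a : S} {n : ℕ}

theorem flat_polynomialC : (Polynomial.C : S →+* S[X]).Flat :=
  (RingHom.flat_algebraMap_iff (R := S) (S := S[X])).2 inferInstance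

theorem coeff_mem_span_of_mem_span_constCols {w : S[X] × S[X]} (h : w ∈ span S[X] (constCols s))
    (i : ℕ) : (w.1.coeff i, w.2.coeff i) ∈ span S s := by
  induction h using Submodule.span_induction generalizing i with
  | mem w hw =>
    obtain ⟨⟨a, b⟩, hab, rfl⟩ := hw
    rcases i with _ | i
    · simpa using Submodule.subset_span hab
    · simp [Polynomial.coeff_C_succ, Prod.mk_zero_zero]
  | zero => simp [Prod.mk_zero_zero]
  | add x y _ _ hx hy => simpa using add_mem (hx i) (hy i)
  | smul p x _ hx =>
    have hsum : ((p • x).1.coeff i, (p • x).2.coeff i) =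
        ∑ k ∈ Finset.HasAntidiagonal.antidiagonal i,
          p.coeff k.1 • (x.1.coeff k.2, x.2.coeff k.2) := by
      simp [Prod.ext_iff, Polynomial.coeff_mul, Prod.fst_sum, Prod.snd_sum]
    rw [hsum]
    exact Submodule.sum_mem _ fun k _ => Submodule.smul_mem _ _ (hx _)

theorem mem_span_constCols {w : S[X] × S[X]} :
    w ∈ span S[X] (constCols s) ↔ ∀ i, (w.1.coeff i, w.2.coeff i) ∈ span S s := by
  refine ⟨coeff_mem_span_of_mem_span_constCols, fun h => ?_⟩
  obtain ⟨m, hm⟩ := exists_gt (max w.1.natDegree w.2.natDegree)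
  have hw : w = ∑ i ∈ Finset.range m, (.X ^ i : S[X]) •
      Prod.map (Polynomial.C : S →+* S[X]) (Polynomial.C : S →+* S[X])
        (w.1.coeff i, w.2.coeff i) := by
    ext1
    · simp only [Prod.fst_sum, Prod.smul_fst, Prod.map_fst, smul_eq_mul, mul_comm (.X ^ _ : S[X]),
        Polynomial.C_mul_X_pow_eq_monomial]
      exact w.1.as_sum_range' m (by omega)
    · simp only [Prod.snd_sum, Prod.smul_snd, Prod.map_snd, smul_eq_mul, mul_comm (.X ^ _ : S[X]),
        Polynomial.C_mul_X_pow_eq_monomial]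
      exact w.2.as_sum_range' m (by omega)
  rw [hw]
  exact Submodule.sum_mem _ fun i _ => Submodule.smul_mem _ _ (span_image_prodMap _ (h i))

theorem mem_annFst_constCols {p : S[X]} : p ∈ annFst (constCols s) ↔ ∀ i, p.coeff i ∈ annFst s := by
  simp [mem_annFst, mem_span_constCols]

theorem annFst_le_annSnd_constCols (h : annFst s ≤ annSnd s) :
    annFst (constCols s) ≤ annSnd (constCols s) := by
  intro p hp
  rw [mem_annSnd, mem_span_constCols]
  simpa using fun i => mem_annSnd.1 (h (mem_annFst_constCols.1 hp i))

theorem mem_annFst_constCols_of_mul_X {p : S[X]} (hp : p * .X ∈ annFst (constCols s)) :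
    p ∈ annFst (constCols s) :=
  mem_annFst_constCols.2 fun i => by simpa using mem_annFst_constCols.1 hp (i + 1)

theorem annFst_constCols : annFst (constCols s) = (annFst s).map Polynomial.C := by
  ext p
  rw [mem_annFst_constCols, Ideal.mem_map_C_iff]

theorem HasPdLE.coker_constCols (h : HasPdLE S (Coker s) n) :
    HasPdLE S[X] (Coker (constCols s)) n :=
  h.coker_image flat_polynomialC

section Regular

variable (h : annFst s ≤ annSnd s) (ha : ∀ r, r * a ∈ annFst s → r ∈ annFst s)
include h ha

theorem smul_newCol_mem_span_constCols {p : S[X]} :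
    p • ((Polynomial.C a, .X) : S[X] × S[X]) ∈ span S[X] (constCols s) ↔
      p ∈ annFst (constCols s) := by
  rw [mem_span_constCols, mem_annFst_constCols]
  refine ⟨fun hp i => ?_, fun hp i => ?_⟩
  · induction i with
    | zero => exact ha _ (mem_annFst.2 (by simpa using hp 0))
    | succ i ih =>
      exact ha _ (mem_annFst.2 (by simpa using sub_mem (hp (i + 1)) (mem_annSnd.1 (h ih))))
  · have hfst : (p.coeff i * a, 0) ∈ span S s := mem_annFst.1 (Ideal.mul_mem_right a _ (hp i))
    rcases i with _ | i
    · simpa using hfst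
    · simpa using add_mem hfst (mem_annSnd.1 (h (hp i)))

theorem mem_span_adjoinCol_of_X_smul {w : S[X] × S[X]}
    (hw : (.X : S[X]) • w ∈ span S[X] (adjoinCol s a)) : w ∈ span S[X] (adjoinCol s a) := by
  set c : S[X] × S[X] := (Polynomial.C a, .X) with hc
  obtain ⟨p, z, hz, hwz⟩ := Submodule.mem_span_insert.1 hw
  have hp0 : p.coeff 0 ∈ annFst s := by
    have hz0 := neg_mem (coeff_mem_span_of_mem_span_constCols hz 0)
    rw [eq_sub_of_add_eq' hwz.symm] at hz0
    exact ha _ (mem_annFst.2 (by simpa [hc] using hz0))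
  have hconst : Polynomial.C (p.coeff 0) • c ∈ span S[X] (constCols s) := by
    rw [smul_newCol_mem_span_constCols h ha, annFst_constCols]
    exact Ideal.mem_map_of_mem _ hp0
  have hX : (.X : S[X]) • (w - p.divX • c) ∈ span S[X] (constCols s) := by
    convert add_mem hz hconst using 1
    nth_rw 1 [← p.X_mul_divX_add] at hwz
    rw [smul_sub, hwz, smul_smul, add_smul]
    abel
  refine Submodule.mem_span_insert.2 ⟨p.divX, w - p.divX • c, mem_span_constCols.2 fun i => ?_,
    (add_sub_cancel _ _).symm⟩
  simpa using mem_span_constCols.1 hX (i + 1)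

theorem annFst_le_annSnd_adjoinCol : annFst (adjoinCol s a) ≤ annSnd (adjoinCol s a) := by
  intro r hr
  have hcol : r • ((Polynomial.C a, .X) : S[X] × S[X]) ∈ span S[X] (adjoinCol s a) :=
    Submodule.smul_mem _ _ (Submodule.subset_span (Set.mem_insert _ _))
  refine mem_annSnd.2 (mem_span_adjoinCol_of_X_smul h ha ?_)
  convert sub_mem hcol (mem_annFst.1 (Ideal.mul_mem_right (Polynomial.C a) _ hr)) using 1
  simp [mul_comm]

theorem mem_annFst_adjoinCol_of_mul_X (r : S[X]) (hr : r * .X ∈ annFst (adjoinCol s a)) :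
    r ∈ annFst (adjoinCol s a) :=
  mem_annFst.2 (mem_span_adjoinCol_of_X_smul h ha (by simpa [mul_comm] using mem_annFst.1 hr))

theorem mem_annFst_adjoinCol_of_mul_neg_X (r : S[X]) (hr : r * -.X ∈ annFst (adjoinCol s a)) :
    r ∈ annFst (adjoinCol s a) :=
  mem_annFst_adjoinCol_of_mul_X h ha r (by rwa [mul_neg, neg_mem_iff] at hr)

theorem HasPdLE.coker_adjoinCol (hs : HasPdLE S (Coker s) n) (hann : HasPdLE S (S ⧸ annFst s) n) :
    HasPdLE S[X] (Coker (adjoinCol s a)) (n + 1) := by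
  refine .coker_insert ?_ (hs.coker_constCols.mono n.le_succ)
  have htors : Ideal.torsionOf S[X] (Coker (constCols s))
      (Submodule.Quotient.mk (Polynomial.C a, .X)) = (annFst s).map Polynomial.C := by
    ext p
    rw [mem_torsionOf_mk, smul_newCol_mem_span_constCols h ha, annFst_constCols]
  rw [htors]
  exact hann.quotient_map flat_polynomialC

end Regular

end AdjoinVariable

end TwoRowMatrices

section GenericColumn

open scoped Polynomial

variable {S : Type u} [CommRing S] {s : Set (S × S)} {n : ℕ}

/-- The columns `s`, read over `S[X][X]`, together with a column consisting of the two new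
variables. -/
abbrev genericCol (s : Set (S × S)) : Set (S[X][X] × S[X][X]) := adjoinCol (constCols s) .X

variable (h : annFst s ≤ annSnd s)
include h

theorem annFst_le_annSnd_genericCol : annFst (genericCol s) ≤ annSnd (genericCol s) :=
  annFst_le_annSnd_adjoinCol (annFst_le_annSnd_constCols h) fun _ => mem_annFst_constCols_of_mul_X

theorem HasPdLE.coker_genericCol (hS : GlobalDimLE S (n + 1)) (hs : HasPdLE S (Coker s) n) :
    HasPdLE S[X][X] (Coker (genericCol s)) (n + 1) := by
  refine .coker_adjoinCol (annFst_le_annSnd_constCols h) (fun _ => mem_annFst_constCols_of_mul_X)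
    hs.coker_constCols ?_
  rw [annFst_constCols]
  exact (hs.quotient_annFst hS).quotient_map flat_polynomialC

end GenericColumn

section GenericColumns

open scoped Polynomial

variable {K A : Type u} [Field K] [CommRing A] [Algebra K A] {d n : ℕ} {F : Set A}
  {s : Set (A × A)}

/-- The ring `S` is a polynomial ring over `K` in `d` variables and `F` is the set of values of the
variables under `φ : S →+* A`, which is compatible with the scalars in `K`. -/
def IsPolynomialOn (K : Type u) {S A : Type u} [Field K] [CommRing S] [CommRing A] [Algebra K A]
    (d : ℕ) (F : Set A) (φ : S →+* A) : Prop :=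
  ∃ (e : MvPolynomial (Fin d) K ≃+* S) (l : Fin d → A), Set.range l = F ∧ ∀ p, φ (e p) = aeval l p

/-- The columns `s` specialize columns over a polynomial ring in `d` variables, the variables being
sent to the elements of `F`, such that every element annihilating the first basis vector of the
cokernel annihilates the second one and the cokernel has projective dimension at most `n`. -/
def IsSpecialization (K : Type u) {A : Type u} [Field K] [CommRing A] [Algebra K A] (d n : ℕ)
    (F : Set A) (s : Set (A × A)) : Prop :=
  ∃ (S : Type u) (_ : CommRing S) (φ : S →+* A) (s₀ : Set (S × S)), IsPolynomialOn K d F φ ∧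
    annFst s₀ ≤ annSnd s₀ ∧ HasPdLE S (Coker s₀) n ∧ Prod.map φ φ '' s₀ = s

/-- The set of entries of the matrix with columns `s`. -/
abbrev entries {A : Type u} (s : Set (A × A)) : Set A := Prod.fst '' s ∪ Prod.snd '' s

theorem eval₂RingHom_image_constCols {S : Type u} [CommRing S] (φ : S →+* A) (v : A)
    (s₀ : Set (S × S)) :
    Prod.map (Polynomial.eval₂RingHom φ v) (Polynomial.eval₂RingHom φ v) '' constCols s₀ =
      Prod.map φ φ '' s₀ := by
  rw [constCols, ← Set.image_comp, Prod.map_comp_map]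
  exact Set.image_congr fun c _ => by
    rw [← RingHom.coe_comp, Polynomial.eval₂RingHom_comp_C]

theorem eval₂RingHom_image_adjoinCol {S : Type u} [CommRing S] (φ : S →+* A) (v : A) (a : S)
    (s₀ : Set (S × S)) :
    Prod.map (Polynomial.eval₂RingHom φ v) (Polynomial.eval₂RingHom φ v) '' adjoinCol s₀ a =
      insert (φ a, v) (Prod.map φ φ '' s₀) := by
  rw [adjoinCol, Set.image_insert_eq, eval₂RingHom_image_constCols]
  simp

namespace IsPolynomialOn

variable {S : Type u} [CommRing S] {φ : S →+* A}

theorem globalDimLE (h : IsPolynomialOn K d F φ) : GlobalDimLE S d :=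
  have ⟨e, _⟩ := h
  (globalDimLE_mvPolynomial K d).of_ringEquiv e

theorem eval₂RingHom (h : IsPolynomialOn K d F φ) (v : A) :
    IsPolynomialOn K (d + 1) (insert v F) (Polynomial.eval₂RingHom φ v) := by
  obtain ⟨e, l, rfl, hl⟩ := h
  let E := (finSuccEquiv K d).toRingEquiv.trans (Polynomial.mapEquiv e)
  have hE : (Polynomial.eval₂RingHom φ v).comp E.toRingHom =
      (aeval (R := K) (Fin.cons v l)).toRingHom := by
    apply MvPolynomial.ringHom_ext
    · intro r
      have hC : finSuccEquiv K d (C r) = Polynomial.C (C r) := by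
        rw [← finSuccEquiv_comp_C_eq_C]; simp
      simp [E, hl, hC]
    · intro i
      cases i using Fin.cases <;> simp [E, finSuccEquiv_X_zero, finSuccEquiv_X_succ, hl]
  exact ⟨E, Fin.cons v l, Fin.range_cons v l, RingHom.congr_fun hE⟩

theorem aeval (l : Fin d → A) : IsPolynomialOn K d (Set.range l)
    (MvPolynomial.aeval l : MvPolynomial (Fin d) K →ₐ[K] A).toRingHom :=
  ⟨.refl _, l, rfl, fun _ => rfl⟩

end IsPolynomialOn

namespace IsSpecialization

theorem aeval (l : Fin d → A) {s₀ : Set (MvPolynomial (Fin d) K × MvPolynomial (Fin d) K)}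
    (h : annFst s₀ ≤ annSnd s₀) :
    IsSpecialization K d d (Set.range l)
      (Prod.map (MvPolynomial.aeval l) (MvPolynomial.aeval l) '' s₀) :=
  ⟨_, _, _, s₀, .aeval l, h, globalDimLE_mvPolynomial K d _, rfl⟩

theorem self (h : IsSpecialization K d n F s) : IsSpecialization K d d F s :=
  have ⟨S, _, φ, s₀, hφ, hle, _, hs⟩ := h
  ⟨S, _, φ, s₀, hφ, hle, hφ.globalDimLE _, hs⟩

theorem insert_column (hd : d ≤ n + 1) (h : IsSpecialization K d n F s) (u v : A) :
    IsSpecialization K (d + 2) (n + 1) (insert v (insert u F)) (insert (u, v) s) := by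
  obtain ⟨S, _, φ, s₀, hφ, hle, hn, rfl⟩ := h
  refine ⟨S[X][X], inferInstance, _, genericCol s₀, (hφ.eval₂RingHom u).eval₂RingHom v,
    annFst_le_annSnd_genericCol hle, .coker_genericCol hle (hφ.globalDimLE.mono hd) hn, ?_⟩
  rw [eval₂RingHom_image_adjoinCol, eval₂RingHom_image_constCols]
  simp

theorem of_adjoinCol {S : Type u} [CommRing S] {φ : S →+* A} {s₀ : Set (S × S)} {a : S}
    (hφ : IsPolynomialOn K d F φ) (hle : annFst s₀ ≤ annSnd s₀)
    (ha : ∀ r, r * a ∈ annFst s₀ → r ∈ annFst s₀) (hn : HasPdLE S (Coker s₀) n)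
    (hann : HasPdLE S (S ⧸ annFst s₀) n) (v : A) :
    IsSpecialization K (d + 1) (n + 1) (insert v F) (insert (φ a, v) (Prod.map φ φ '' s₀)) :=
  ⟨S[X], inferInstance, _, adjoinCol s₀ a, hφ.eval₂RingHom v, annFst_le_annSnd_adjoinCol hle ha,
    .coker_adjoinCol hle ha hn hann, eval₂RingHom_image_adjoinCol φ v a s₀⟩

theorem insert_shared_columns (h : IsSpecialization K d n F s) (u v w : A) :
    IsSpecialization K (d + 3) (d + 2) (insert w (insert v (insert u F)))
      (insert (-v, w) (insert (u, v) s)) := by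
  obtain ⟨S, _, φ, s₀, hφ, hle, _, rfl⟩ := h
  have hφ' := (hφ.eval₂RingHom u).eval₂RingHom v
  have hpd : HasPdLE S[X][X] (Coker (genericCol s₀)) (d + 1) :=
    .coker_genericCol hle (hφ.globalDimLE.mono d.le_succ) (hφ.globalDimLE _)
  convert of_adjoinCol hφ' (annFst_le_annSnd_genericCol hle)
      (mem_annFst_adjoinCol_of_mul_neg_X (annFst_le_annSnd_constCols hle)
        fun _ => mem_annFst_constCols_of_mul_X) hpd (hpd.quotient_annFst hφ'.globalDimLE) w using 2
  · simp
  · rw [eval₂RingHom_image_adjoinCol, eval₂RingHom_image_constCols]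
    simp

theorem cons_column {k : ℕ} {c : Fin k → A × A} (hd : d ≤ n + 1)
    (h : IsSpecialization K d n (F ∪ entries (Set.range c)) (Set.range c ∪ s)) (a : A × A) :
    IsSpecialization K (d + 2) (n + 1)
      (F ∪ entries (Set.range (Fin.cons a c : Fin (k + 1) → A × A)))
      (Set.range (Fin.cons a c : Fin (k + 1) → A × A) ∪ s) := by
  convert h.insert_column hd a.1 a.2 using 1
  · ext z
    simp only [Fin.range_cons, Set.image_insert_eq, Set.mem_union, Set.mem_insert_iff]
    tauto
  · rw [Fin.range_cons, Set.insert_union]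

theorem union_columns (h : IsSpecialization K d n F s) {k : ℕ} (c : Fin k → A × A) :
    IsSpecialization K (d + 2 * k) (d + 2 * k) (F ∪ entries (Set.range c))
      (Set.range c ∪ s) := by
  induction k with
  | zero => simpa [entries] using h.self
  | succ k ih =>
    rw [← Fin.cons_self_tail c]
    exact ((ih (Fin.tail c)).cons_column (Nat.le_succ _) (c 0)).self

theorem union_columns_succ (h : IsSpecialization K d n F s) {k : ℕ} (c : Fin (k + 1) → A × A) :
    IsSpecialization K (d + 2 * (k + 1)) (d + 2 * k + 1) (F ∪ entries (Set.range c))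
      (Set.range c ∪ s) := by
  rw [← Fin.cons_self_tail c]
  exact (h.union_columns (Fin.tail c)).cons_column (Nat.le_succ _) (c 0)

theorem union_columns_succ_succ (h : IsSpecialization K d n F s) {k : ℕ}
    (c : Fin (k + 2) → A × A) :
    IsSpecialization K (d + 2 * (k + 2)) (d + 2 * k + 2) (F ∪ entries (Set.range c))
      (Set.range c ∪ s) := by
  rw [← Fin.cons_self_tail c]
  exact (h.union_columns_succ (Fin.tail c)).cons_column le_rfl (c 0)

end IsSpecialization

end GenericColumns

section LinearForms

variable {K : Type u} [Field K] {σ : Type}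

theorem linearIndependent_X_homogeneousSubmodule :
    LinearIndependent K fun i : σ =>
      (⟨X i, isHomogeneous_X K i⟩ : homogeneousSubmodule σ K 1) :=
  .of_comp (homogeneousSubmodule σ K 1).subtype (linearIndependent_X σ K)

theorem span_range_X_homogeneousSubmodule :
    Submodule.span K (Set.range fun i : σ =>
      (⟨X i, isHomogeneous_X K i⟩ : homogeneousSubmodule σ K 1)) = ⊤ := by
  apply Submodule.map_injective_of_injective (homogeneousSubmodule σ K 1).injective_subtype
  rw [Submodule.map_span, ← Set.range_comp, Submodule.map_top, Submodule.range_subtype]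
  exact homogeneousSubmodule_one_eq_span_X.symm

theorem exists_algEquiv_X {ι : Type*} (b : Module.Basis ι K (homogeneousSubmodule σ K 1)) :
    ∃ e : MvPolynomial ι K ≃ₐ[K] MvPolynomial σ K, ∀ i, e (X i) = b i := by
  let c : Module.Basis σ K (homogeneousSubmodule σ K 1) :=
    .mk linearIndependent_X_homogeneousSubmodule span_range_X_homogeneousSubmodule.ge
  have hc : (SymmetricAlgebra.equivMvPolynomial c).toLinearMap ∘ₗ SymmetricAlgebra.ι K _ =
      (homogeneousSubmodule σ K 1).subtype := by
    refine c.ext fun i => ?_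
    rw [LinearMap.comp_apply]
    exact (SymmetricAlgebra.equivMvPolynomial_ι_apply c i).trans (by simp [c])
  exact ⟨(SymmetricAlgebra.equivMvPolynomial b).symm.trans (SymmetricAlgebra.equivMvPolynomial c),
    fun i => by simpa using LinearMap.congr_fun hc (b i)⟩

theorem exists_basis_sum_inr {V : Type u} [AddCommGroup V] [Module K V] {ι : Type*} {l : ι → V}
    (hl : LinearIndependent K l) :
    ∃ (κ : Type u) (b : Module.Basis (κ ⊕ ι) K V), ∀ i, b (.inr i) = l i := by
  obtain ⟨W, hW⟩ := Submodule.exists_isCompl (Submodule.span K (Set.range l))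
  exact ⟨_, ((Module.Basis.ofVectorSpace K W).prod (.span hl)).map
    (Submodule.prodEquivOfIsCompl _ _ hW.symm), fun i => by simp [Module.Basis.span_apply]⟩

theorem exists_algEquiv_X_inr {ι : Type*} {l : ι → MvPolynomial σ K}
    (hl : LinearIndependent K l) (hh : ∀ i, (l i).IsHomogeneous 1) :
    ∃ (κ : Type u) (e : MvPolynomial (κ ⊕ ι) K ≃ₐ[K] MvPolynomial σ K),
      ∀ i, e (X (.inr i)) = l i := by
  let l' : ι → homogeneousSubmodule σ K 1 := fun i => ⟨l i, hh i⟩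
  have hl' : LinearIndependent K l' := .of_comp (homogeneousSubmodule σ K 1).subtype hl
  obtain ⟨κ, b, hb⟩ := exists_basis_sum_inr hl'
  obtain ⟨e, he⟩ := exists_algEquiv_X b
  exact ⟨κ, e, fun i => by rw [he, hb]⟩

theorem flat_aeval {ι : Type*} {l : ι → MvPolynomial σ K}
    (hl : LinearIndependent K l) (hh : ∀ i, (l i).IsHomogeneous 1) :
    (aeval l : MvPolynomial ι K →ₐ[K] MvPolynomial σ K).toRingHom.Flat := by
  obtain ⟨κ, e, he⟩ := exists_algEquiv_X_inr hl hh
  let E : MvPolynomial κ (MvPolynomial ι K) ≃ₐ[K] MvPolynomial σ K :=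
    (sumAlgEquiv K κ ι).symm.trans e
  have hE : (aeval l).toRingHom = E.toRingEquiv.toRingHom.comp (C : MvPolynomial ι K →+* _) := by
    apply MvPolynomial.ringHom_ext
    · intro r
      exact (aeval_C l r).trans (E.commutes r).symm
    · intro i
      simp [E, sumAlgEquiv_symm_C_X, he]
  rw [hE]
  exact .comp ((RingHom.flat_algebraMap_iff (R := MvPolynomial ι K)).2 inferInstance)
    (.of_bijective E.bijective)

theorem prime_and_not_dvd {x y : MvPolynomial σ K} (hx : x.IsHomogeneous 1)
    (hy : y.IsHomogeneous 1) (hxy : LinearIndependent K ![x, y]) : Prime x ∧ ¬ x ∣ y := by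
  obtain ⟨κ, e, he⟩ := exists_algEquiv_X_inr hxy (Fin.forall_fin_two.2 ⟨hx, hy⟩)
  obtain rfl : e (X (.inr 0)) = x := he 0
  obtain rfl : e (X (.inr 1)) = y := he 1
  refine ⟨(MulEquiv.prime_iff e.toMulEquiv).2 X_prime, ?_⟩
  rw [map_dvd_iff, X_dvd_X]
  simp

end LinearForms

section Descent

variable {K : Type u} [Field K] {σ : Type} {d n : ℕ} {F : Set (MvPolynomial σ K)}
  {s : Set (MvPolynomial σ K × MvPolynomial σ K)}

theorem exists_linearIndependent_range_aeval {A : Type*} [CommRing A] [Algebra K A] {F : Set A}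
    (hF : F.Finite) :
    ∃ l : Fin (Module.finrank K (Submodule.span K F)) → A, LinearIndependent K l ∧
      (∀ i, l i ∈ F) ∧ (aeval l : _ →ₐ[K] A).range = Algebra.adjoin K F := by
  have : Module.Finite K (Submodule.span K F) := .span_of_finite K hF
  obtain ⟨l, hmem, hspan, hl⟩ := Submodule.exists_fun_fin_finrank_span_eq K F
  refine ⟨l, hl, hmem, ?_⟩
  rw [← Algebra.adjoin_range_eq_range_aeval, ← Algebra.adjoin_span, hspan, Algebra.adjoin_span]

theorem hasPdLE_coker_of_mem_adjoin (hfin : F.Finite) (hF : ∀ z ∈ F, z.IsHomogeneous 1)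
    (hs : ∀ c ∈ s, c.1 ∈ Algebra.adjoin K F ∧ c.2 ∈ Algebra.adjoin K F) :
    HasPdLE (MvPolynomial σ K) (Coker s) (Module.finrank K (Submodule.span K F)) := by
  obtain ⟨l, hl, hmem, hrange⟩ := exists_linearIndependent_range_aeval (K := K) hfin
  let φ := (aeval l : MvPolynomial _ K →ₐ[K] MvPolynomial σ K).toRingHom
  have himage : Prod.map φ φ '' (Prod.map φ φ ⁻¹' s) = s := by
    refine Set.image_preimage_eq_of_subset fun c hc => ?_
    rw [Set.range_prodMap]
    rw [← hrange] at hs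
    exact hs c hc
  rw [← himage]
  exact .coker_image (flat_aeval hl fun i => hF _ (hmem i)) (globalDimLE_mvPolynomial K _ _)

theorem IsSpecialization.hasPdLE_coker (h : IsSpecialization K d n F s)
    (hF : ∀ z ∈ F, z.IsHomogeneous 1)
    (hd : d ≤ Module.finrank K (Submodule.span K F) ∨ d ≤ n + 1) :
    HasPdLE (MvPolynomial σ K) (Coker s) n := by
  obtain ⟨S, _, φ, s₀, ⟨e, l, rfl, he⟩, -, hn, rfl⟩ := h
  have hφ : φ = RingHom.comp (MvPolynomial.aeval (R := K) l : _ →ₐ[K] _).toRingHom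
      e.symm.toRingHom :=
    RingHom.ext fun a => (congrArg φ (e.apply_symm_apply a)).symm.trans (he _)
  by_cases hli : LinearIndependent K l
  · have hflat : φ.Flat := by
      rw [hφ]
      exact .comp (.of_bijective e.symm.bijective) (flat_aeval hli fun i => hF _ ⟨i, rfl⟩)
    exact hn.coker_image hflat
  · have hrank : Module.finrank K (Submodule.span K (Set.range l)) ≤ n := by
      rw [linearIndependent_iff_card_le_finrank_span, Fintype.card_fin, not_le] at hli
      exact Nat.le_of_lt_succ (hli.trans_le (hd.resolve_left hli.not_ge))
    have hmem (a : S) : φ a ∈ Algebra.adjoin K (Set.range l) := by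
      rw [hφ, Algebra.adjoin_range_eq_range_aeval]
      exact ⟨e.symm a, rfl⟩
    refine (hasPdLE_coker_of_mem_adjoin (Set.finite_range l) hF ?_).mono hrank
    rintro _ ⟨c, -, rfl⟩
    exact ⟨hmem _, hmem _⟩

end Descent

section NormalForms

variable {S : Type u} [CommRing S] {s : Set (S × S)}

theorem fst_eq_zero_of_mem_span (hs : ∀ c ∈ s, c.1 = 0) {c : S × S}
    (hc : c ∈ Submodule.span S s) : c.1 = 0 :=
  (Submodule.span_le.2 hs : Submodule.span S s ≤ LinearMap.ker (LinearMap.fst S S S)) hc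

theorem annFst_le_annSnd_of_fst_eq_zero (hs : ∀ c ∈ s, c.1 = 0) : annFst s ≤ annSnd s := by
  intro r hr
  obtain rfl : r = 0 := fst_eq_zero_of_mem_span hs (mem_annFst.1 hr)
  exact zero_mem _

theorem annFst_le_annSnd_insert (hs : ∀ c ∈ s, c.1 = 0) {b : S}
    (hb : (0, b) ∈ Submodule.span S s) (e v : S) :
    annFst (insert (e * v + b, v) s) ≤ annSnd (insert (e * v + b, v) s) := by
  intro r hr
  rw [mem_annFst, Submodule.mem_span_insert] at hr
  obtain ⟨f, ⟨p, q⟩, hc, h⟩ := hr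
  obtain rfl : p = 0 := fst_eq_zero_of_mem_span hs hc
  obtain ⟨h₁, h₂⟩ : r = f * (e * v + b) ∧ 0 = f * v + q := by simpa using h
  have hrow : ((0, r) : S × S) = f • (0, b) - e • (0, q) :=
    Prod.ext (by simp) (show r = f * b - e * q by linear_combination h₁ - e * h₂)
  rw [mem_annSnd, hrow]
  exact Submodule.span_mono (Set.subset_insert _ _)
    (sub_mem (Submodule.smul_mem _ f hb) (Submodule.smul_mem _ e hc))

variable {K A : Type u} [Field K] [CommRing A] [Algebra K A]

theorem IsSpecialization.pair (b₁ b₂ : A) :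
    IsSpecialization K 2 2 {b₁, b₂} {(0, b₁), (0, b₂)} := by
  convert IsSpecialization.aeval (K := K) ![b₁, b₂] (s₀ := {(0, X 0), (0, X 1)})
    (annFst_le_annSnd_of_fst_eq_zero (by simp)) using 1
  · simp [Set.pair_comm]
  · simp [Set.image_pair]

theorem IsSpecialization.smul_pair (b : A) (g₁ g₂ : K) :
    IsSpecialization K 1 1 {b} {(0, g₁ • b), (0, g₂ • b)} := by
  convert IsSpecialization.aeval (K := K) ![b] (s₀ := {(0, g₁ • X 0), (0, g₂ • X 0)})
    (annFst_le_annSnd_of_fst_eq_zero (by simp)) using 1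
  · simp
  · simp [Set.image_pair]

theorem IsSpecialization.insert_smul_add {b₁ b₂ b : A} (hb : b ∈ Submodule.span K {b₁, b₂})
    (e : K) (v : A) :
    IsSpecialization K 3 3 {v, b₁, b₂} {(e • v + b, v), (0, b₁), (0, b₂)} := by
  obtain ⟨g₁, g₂, rfl⟩ := Submodule.mem_span_pair.1 hb
  convert IsSpecialization.aeval (K := K) ![v, b₁, b₂]
    (s₀ := {(C e * X 0 + (C g₁ * X 1 + C g₂ * X 2), X 0), (0, X 1), (0, X 2)})
    (annFst_le_annSnd_insert (by simp) (Submodule.mem_span_pair.2 ⟨C g₁, C g₂, by simp⟩) _ _)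
    using 1
  · simp only [Matrix.range_cons, Matrix.range_empty, Set.union_empty, Set.singleton_union]
  · simp [Set.image_insert_eq, Algebra.smul_def]

end NormalForms

section ColumnSpans

theorem span_insert_add_of_mem {R M : Type*} [Ring R] [AddCommGroup M] [Module R M] {s : Set M}
    {b : M} (hb : b ∈ Submodule.span R s) (a : M) :
    Submodule.span R (insert (a + b) s) = Submodule.span R (insert a s) := by
  apply le_antisymm <;> rw [Submodule.span_le, Set.insert_subset_iff]
  · exact ⟨Submodule.mem_span_insert.2 ⟨1, b, hb, by simp⟩,
      (Set.subset_insert _ _).trans Submodule.subset_span⟩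
  · exact ⟨Submodule.mem_span_insert.2 ⟨1, -b, neg_mem hb, by simp⟩,
      (Set.subset_insert _ _).trans Submodule.subset_span⟩

theorem exists_span_range_union_eq {K M : Type u} [Field K] [AddCommGroup M] [Module K M]
    {n k j : ℕ} (hn : k + j = n) (c : Fin n → M) {v : Fin k → Fin n → K}
    (hv : LinearIndependent K v) :
    ∃ w : Fin j → M,
      Submodule.span K (Set.range (Fintype.linearCombination K c ∘ v) ∪ Set.range w) =
        Submodule.span K (Set.range c) := by
  obtain ⟨κ, b, hb⟩ := exists_basis_sum_inr hv
  have : Finite (κ ⊕ Fin k) := Module.Finite.finite_basis b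
  have : Finite κ := .of_injective _ (Sum.inl_injective (β := Fin k))
  have hcard : Nat.card κ = j := by
    have := Module.finrank_eq_nat_card_basis b
    rw [Module.finrank_fin_fun, Nat.card_sum, Nat.card_fin] at this
    omega
  have e := Finite.equivFinOfCardEq hcard
  have hrange : Set.range v ∪ Set.range (b ∘ .inl ∘ e.symm) = Set.range b := by
    rw [← funext hb, ← Function.comp_assoc, e.symm.surjective.range_comp, Set.union_comm,
      ← Set.Sum.elim_range]
    exact congrArg Set.range (Sum.elim_comp_inl_inr b)
  refine ⟨Fintype.linearCombination K c ∘ b ∘ .inl ∘ e.symm, ?_⟩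
  rw [Set.range_comp _ v, Set.range_comp _ (b ∘ _), ← Set.image_union, hrange,
    ← Submodule.map_span, b.span_eq, Submodule.map_top, Fintype.range_linearCombination]

theorem zero_mk_mem_span_pair {R M N : Type*} [Semiring R] [AddCommMonoid M] [Module R M]
    [AddCommMonoid N] [Module R N] {b b₁ b₂ : N} (hb : b ∈ Submodule.span R {b₁, b₂}) :
    ((0 : M), b) ∈ Submodule.span R {((0 : M), b₁), (0, b₂)} := by
  simpa [Submodule.map_span, Set.image_pair] using
    Submodule.mem_map_of_mem (f := LinearMap.inr R M N) hb

theorem exists_relation_of_not_linearIndependent {K A : Type*} [Field K] [CommRing A]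
    [Algebra K A] {b₁ b₂ : A} {ι : Type*} [Fintype ι] {c : ι → A × A}
    (hb : LinearIndependent K ![b₁, b₂])
    (hli : ¬ LinearIndependent K
      (Sum.elim ![b₁, b₂] (Sum.elim (Prod.fst ∘ c) (Prod.snd ∘ c)))) :
    ∃ (α β : ι → K) (b : A), b ∈ Submodule.span K {b₁, b₂} ∧ (α ≠ 0 ∨ β ≠ 0) ∧
      (Fintype.linearCombination K c α).1 + (Fintype.linearCombination K c β).2 + b = 0 := by
  rw [Fintype.not_linearIndependent_iff] at hli
  obtain ⟨g, hg, i, hi⟩ := hli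
  simp only [Fintype.sum_sum_type, Sum.elim_inl, Sum.elim_inr] at hg
  refine ⟨g ∘ .inr ∘ .inl, g ∘ .inr ∘ .inr, ∑ j, g (.inl j) • ![b₁, b₂] j, ?_, ?_, ?_⟩
  · exact Submodule.mem_span_pair.2 ⟨g (.inl 0), g (.inl 1), by simp⟩
  · by_contra! hzero
    have hα (j : ι) : g (.inr (.inl j)) = 0 := congrFun hzero.1 j
    have hβ (j : ι) : g (.inr (.inr j)) = 0 := congrFun hzero.2 j
    have hγ := Fintype.linearIndependent_iff.1 hb (g ∘ .inl) (by simpa [hα, hβ] using hg)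
    obtain j | j | j := i
    exacts [hi (hγ j), hi (hα j), hi (hβ j)]
  · rw [← hg]
    simp [Fintype.linearCombination_apply, Prod.fst_sum, Prod.snd_sum, add_comm]

variable {R : Type u} [CommRing R] {s s' : Set (R × R)} {n : ℕ}

theorem HasPdLE.coker_of_span_eq {K : Type*} [CommRing K] [Algebra K R]
    (hs : Submodule.span K s = Submodule.span K s') (h : HasPdLE R (Coker s) n) :
    HasPdLE R (Coker s') n := by
  refine h.congr (Submodule.quotEquivOfEq _ _ ?_)
  rw [← Submodule.span_span_of_tower K, hs, Submodule.span_span_of_tower]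

theorem HasPdLE.coker_of_image_linearEquiv (e : (R × R) ≃ₗ[R] R × R)
    (h : HasPdLE R (Coker (e '' s)) n) : HasPdLE R (Coker s) n :=
  h.congr (Submodule.Quotient.equiv _ _ e (Submodule.map_span _ _)).symm

end ColumnSpans

section Columns

variable {K : Type u} [Field K] {σ : Type} {k : ℕ} {b₁ b₂ b : MvPolynomial σ K}
  {c : Fin (k + 2) → MvPolynomial σ K × MvPolynomial σ K}

/-- The columns of height two whose entries are linear forms or zero. -/
noncomputable abbrev linearColumns (K : Type u) [Field K] (σ : Type) :
    Submodule K (MvPolynomial σ K × MvPolynomial σ K) :=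
  (homogeneousSubmodule σ K 1).prod (homogeneousSubmodule σ K 1)

theorem isHomogeneous_of_mem_entries {s : Set (MvPolynomial σ K × MvPolynomial σ K)}
    (hs : s ⊆ linearColumns K σ) {z : MvPolynomial σ K} (hz : z ∈ entries s) :
    z.IsHomogeneous 1 := by
  obtain ⟨c, hc, rfl⟩ | ⟨c, hc, rfl⟩ := hz
  exacts [(hs hc).1, (hs hc).2]

theorem isHomogeneous_of_mem_span_pair (hb₁ : b₁.IsHomogeneous 1) (hb₂ : b₂.IsHomogeneous 1)
    (hb : b ∈ Submodule.span K {b₁, b₂}) : b.IsHomogeneous 1 :=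
  (Submodule.span_le.2 (Set.pair_subset hb₁ hb₂) : _ ≤ homogeneousSubmodule σ K 1) hb

section Homogeneous

variable (hb₁ : b₁.IsHomogeneous 1) (hb₂ : b₂.IsHomogeneous 1)
  (hc : Set.range c ⊆ linearColumns K σ)
include hb₁ hb₂ hc

theorem hasPdLE_coker_of_linearIndependent
    (hli : LinearIndependent K
      (Sum.elim ![b₁, b₂] (Sum.elim (Prod.fst ∘ c) (Prod.snd ∘ c)))) :
    HasPdLE (MvPolynomial σ K) (Coker (Set.range c ∪ {(0, b₁), (0, b₂)})) (2 * k + 4) := by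
  refine (((IsSpecialization.pair b₁ b₂).union_columns_succ_succ c).hasPdLE_coker ?_
    (.inl ?_)).mono (by omega)
  · rintro z ((rfl | rfl) | hz)
    exacts [hb₁, hb₂, isHomogeneous_of_mem_entries hc hz]
  · rw [linearIndependent_iff_card_le_finrank_span, Set.Sum.elim_range, Set.Sum.elim_range,
      Set.range_comp, Set.range_comp, Matrix.range_cons_cons_empty] at hli
    simpa [two_mul, entries, Set.finrank] using hli

theorem hasPdLE_coker_of_not_linearIndependent (hli : ¬ LinearIndependent K ![b₁, b₂]) :
    HasPdLE (MvPolynomial σ K) (Coker (Set.range c ∪ {(0, b₁), (0, b₂)})) (2 * k + 4) := by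
  obtain ⟨b, g₁, g₂, hb, rfl, rfl⟩ :
      ∃ (b : MvPolynomial σ K) (g₁ g₂ : K), b.IsHomogeneous 1 ∧ g₁ • b = b₁ ∧ g₂ • b = b₂ := by
    by_cases hzero : b₁ = 0
    · exact ⟨b₂, 0, 1, hb₂, by simp [hzero], one_smul _ _⟩
    · rw [LinearIndependent.pair_iff' hzero] at hli
      push Not at hli
      obtain ⟨q, hq⟩ := hli
      exact ⟨b₁, 1, q, hb₁, one_smul _ _, hq⟩
  refine (((IsSpecialization.smul_pair b g₁ g₂).union_columns_succ c).hasPdLE_coker ?_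
    (.inr (by omega))).mono (by omega)
  rintro z (rfl | hz)
  exacts [hb, isHomogeneous_of_mem_entries hc hz]

theorem hasPdLE_coker_of_relation_of_linearIndependent (hb : b ∈ Submodule.span K {b₁, b₂})
    {α β : Fin (k + 2) → K} (hli : LinearIndependent K ![α, β])
    (hrel : (Fintype.linearCombination K c α).1 + (Fintype.linearCombination K c β).2 + b = 0) :
    HasPdLE (MvPolynomial σ K) (Coker (Set.range c ∪ {(0, b₁), (0, b₂)})) (2 * k + 4) := by
  obtain ⟨w, hw⟩ := exists_span_range_union_eq (add_comm 2 k) c hli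
  rw [Set.range_comp, Matrix.range_cons_cons_empty, Set.image_pair] at hw
  generalize Fintype.linearCombination K c α = p at hrel hw
  generalize Fintype.linearCombination K c β = q at hrel hw
  have hspan : Submodule.span K (insert (-(q.2 + b), p.2)
      (insert (q.1, q.2 + b) (Set.range w ∪ {(0, b₁), (0, b₂)}))) =
      Submodule.span K (Set.range c ∪ {(0, b₁), (0, b₂)}) := by
    have hp : -(q.2 + b) = p.1 := by linear_combination -hrel
    have hq : (q.1, q.2 + b) = q + (0, b) := by ext <;> simp
    have hmem : ((0 : MvPolynomial σ K), b) ∈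
        Submodule.span K (Set.range w ∪ {(0, b₁), (0, b₂)}) :=
      Submodule.span_mono Set.subset_union_right (zero_mk_mem_span_pair hb)
    rw [hp, hq, Submodule.span_insert, span_insert_add_of_mem hmem, ← Submodule.span_insert,
      Submodule.span_union (Set.range c), ← hw, ← Submodule.span_union]
    simp only [Set.insert_union, Set.singleton_union]
  have hlin : {p, q} ∪ Set.range w ⊆ linearColumns K σ :=
    Submodule.subset_span.trans (hw.le.trans (Submodule.span_le.2 hc))
  rw [Set.union_subset_iff, Set.pair_subset_iff] at hlin
  obtain ⟨⟨hp, hq⟩, hwl⟩ := hlin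
  refine ((((IsSpecialization.pair b₁ b₂).union_columns w).insert_shared_columns q.1 (q.2 + b)
    p.2).hasPdLE_coker ?_ (.inr (by omega))).mono (by omega) |>.coker_of_span_eq hspan
  rintro z (rfl | rfl | rfl | (rfl | rfl) | hz)
  exacts [hp.2, hq.2.add (isHomogeneous_of_mem_span_pair hb₁ hb₂ hb), hq.1, hb₁, hb₂,
    isHomogeneous_of_mem_entries hwl hz]

theorem hasPdLE_coker_of_relation_of_smul (hb : b ∈ Submodule.span K {b₁, b₂})
    {α : Fin (k + 2) → K} (hα : α ≠ 0) {q : K}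
    (hrel : (Fintype.linearCombination K c α).1 + (Fintype.linearCombination K c (q • α)).2 + b
      = 0) :
    HasPdLE (MvPolynomial σ K) (Coker (Set.range c ∪ {(0, b₁), (0, b₂)})) (2 * k + 4) := by
  obtain ⟨w, hw⟩ := exists_span_range_union_eq (show 1 + (k + 1) = k + 2 by omega) c
    (LinearIndependent.of_subsingleton (v := ![α]) 0 hα)
  rw [Set.range_comp, Matrix.range_cons, Matrix.range_empty, Set.union_empty,
    Set.image_singleton] at hw
  rw [map_smul] at hrel
  generalize Fintype.linearCombination K c α = p at hrel hw
  have hspan : Submodule.span K (Set.range w ∪ {(-q • p.2 + -b, p.2), (0, b₁), (0, b₂)}) =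
      Submodule.span K (Set.range c ∪ {(0, b₁), (0, b₂)}) := by
    have hp : -q • p.2 + -b = p.1 := by
      rw [Prod.smul_snd] at hrel
      rw [neg_smul]
      linear_combination -hrel
    rw [hp, Submodule.span_union (Set.range c), ← hw, ← Submodule.span_union]
    congr 1
    grind
  have hlin : {p} ∪ Set.range w ⊆ linearColumns K σ :=
    Submodule.subset_span.trans (hw.le.trans (Submodule.span_le.2 hc))
  rw [Set.union_subset_iff, Set.singleton_subset_iff] at hlin
  refine (((IsSpecialization.insert_smul_add (neg_mem hb) (-q) p.2).union_columns_succ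
    w).hasPdLE_coker ?_ (.inr (by omega))).mono (by omega) |>.coker_of_span_eq hspan
  rintro z ((rfl | rfl | rfl) | hz)
  exacts [hlin.1.2, hb₁, hb₂, isHomogeneous_of_mem_entries hlin.2 hz]

theorem hasPdLE_coker_of_relation (hb : b ∈ Submodule.span K {b₁, b₂})
    {α β : Fin (k + 2) → K} (hα : α ≠ 0)
    (hrel : (Fintype.linearCombination K c α).1 + (Fintype.linearCombination K c β).2 + b = 0) :
    HasPdLE (MvPolynomial σ K) (Coker (Set.range c ∪ {(0, b₁), (0, b₂)})) (2 * k + 4) := by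
  by_cases hli : LinearIndependent K ![α, β]
  · exact hasPdLE_coker_of_relation_of_linearIndependent hb₁ hb₂ hc hb hli hrel
  · rw [LinearIndependent.pair_iff' hα] at hli
    push Not at hli
    obtain ⟨q, rfl⟩ := hli
    exact hasPdLE_coker_of_relation_of_smul hb₁ hb₂ hc hb hα hrel

/-- Adding the first row to the second one turns the relation into one that involves the first
row. -/
theorem hasPdLE_coker_of_relation_snd (hb : b ∈ Submodule.span K {b₁, b₂})
    {β : Fin (k + 2) → K} (hβ : β ≠ 0)
    (hrel : (Fintype.linearCombination K c β).2 + b = 0) :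
    HasPdLE (MvPolynomial σ K) (Coker (Set.range c ∪ {(0, b₁), (0, b₂)})) (2 * k + 4) := by
  let e : (MvPolynomial σ K × MvPolynomial σ K) ≃ₗ[MvPolynomial σ K]
      MvPolynomial σ K × MvPolynomial σ K := .skewProd (.refl _ _) (.refl _ _) .id
  have he : e '' (Set.range c ∪ {(0, b₁), (0, b₂)}) = Set.range (e ∘ c) ∪ {(0, b₁), (0, b₂)} := by
    rw [Set.image_union, Set.image_pair, Set.range_comp]
    simp [e]
  refine .coker_of_image_linearEquiv e ?_
  rw [he]
  refine hasPdLE_coker_of_relation hb₁ hb₂ ?_ hb (neg_ne_zero.2 hβ) (β := β) ?_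
  · rintro _ ⟨j, rfl⟩
    have := hc ⟨j, rfl⟩
    exact ⟨this.1, this.2.add this.1⟩
  · have hcomp (γ : Fin (k + 2) → K) : Fintype.linearCombination K (e ∘ c) γ =
        e (Fintype.linearCombination K c γ) := by
      rw [Fintype.linearCombination_apply, Fintype.linearCombination_apply, map_sum]
      exact Finset.sum_congr rfl fun j _ => (e.toLinearMap.map_smul_of_tower (γ j) (c j)).symm
    rw [hcomp, hcomp]
    simpa [e, add_comm] using hrel

theorem hasPdLE_coker_union_pair :
    HasPdLE (MvPolynomial σ K) (Coker (Set.range c ∪ {(0, b₁), (0, b₂)})) (2 * k + 4) := by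
  by_cases hli₂ : LinearIndependent K ![b₁, b₂]
  case neg => exact hasPdLE_coker_of_not_linearIndependent hb₁ hb₂ hc hli₂
  by_cases hli : LinearIndependent K
    (Sum.elim ![b₁, b₂] (Sum.elim (Prod.fst ∘ c) (Prod.snd ∘ c)))
  · exact hasPdLE_coker_of_linearIndependent hb₁ hb₂ hc hli
  · obtain ⟨α, β, b, hb, hne, hrel⟩ := exists_relation_of_not_linearIndependent hli₂ hli
    by_cases hα : α = 0
    · subst hα
      rw [map_zero, Prod.fst_zero, zero_add] at hrel
      exact hasPdLE_coker_of_relation_snd hb₁ hb₂ hc hb (hne.resolve_left (· rfl)) hrel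
    · exact hasPdLE_coker_of_relation hb₁ hb₂ hc hb hα hrel

end Homogeneous

end Columns

section Minors

open Submodule (span)

variable {R : Type u} [CommRing R]

/-- The minor of the `2 × 2` matrix with first column `(x, y)`, as a linear function of the second
column. -/
def minorMap (x y : R) : R × R →ₗ[R] R :=
  x • LinearMap.snd R R R - y • LinearMap.fst R R R

theorem minorMap_apply (x y : R) (c : R × R) : minorMap x y c = x * c.2 - y * c.1 :=
  rfl

theorem map_minorMap_span {n : ℕ} (x y : R) (u v : Fin n → R) :
    (span R (insert (x, y) (Set.range fun j => (u j, v j)))).map (minorMap x y) =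
      repByMinors x y u v := by
  have hxy : minorMap x y (x, y) = 0 := by rw [minorMap_apply, mul_comm, sub_self]
  rw [Submodule.map_span, Set.image_insert_eq, hxy, Submodule.span_insert_zero, ← Set.range_comp]
  rfl

variable [IsDomain R] {x y : R}

theorem ker_minorMap (hx : Prime x) (hxy : ¬ x ∣ y) :
    LinearMap.ker (minorMap x y) = span R {(x, y)} := by
  ext ⟨a, b⟩
  rw [LinearMap.mem_ker, minorMap_apply, sub_eq_zero, Submodule.mem_span_singleton]
  constructor
  · intro hab
    obtain ⟨t, rfl⟩ : x ∣ a := (hx.dvd_or_dvd ⟨b, hab.symm⟩).resolve_left hxy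
    have hb : x * (t * y) = x * b := by linear_combination -hab
    exact ⟨t, Prod.ext (mul_comm t x) (mul_left_cancel₀ hx.ne_zero hb)⟩
  · rintro ⟨t, ht⟩
    obtain ⟨rfl, rfl⟩ := Prod.ext_iff.1 ht
    simp only [Prod.smul_mk, smul_eq_mul]
    ring

theorem HasPdLE.quotient_repByMinors (hx : Prime x) (hxy : ¬ x ∣ y) {n q : ℕ} {u v : Fin n → R}
    (h : HasPdLE R (Coker (insert (x, y) (Set.range fun j => (u j, v j)))) (q + 2)) :
    HasPdLE R (R ⧸ repByMinors x y u v) (q + 2) := by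
  set s := insert (x, y) (Set.range fun j => (u j, v j)) with hs
  have hspan : HasPdLE R (span R s) (q + 1) := of_quotient (of_projective _) h
  have hle : span R {(x, y)} ≤ span R s :=
    Submodule.span_mono (Set.singleton_subset_iff.2 (Set.mem_insert _ _))
  have hne : (x, y) ≠ 0 := fun h0 => hx.ne_zero (congrArg Prod.fst h0)
  have hker : HasPdLE R (LinearMap.ker ((minorMap x y).domRestrict (span R s))) q := by
    rw [LinearMap.ker_domRestrict, ker_minorMap hx hxy]
    exact (of_projective q).congr ((LinearEquiv.toSpanNonzeroSingleton R _ _ hne).trans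
      (Submodule.comapSubtypeEquivOfLe hle).symm)
  have hrange := range hker hspan
  rw [LinearMap.range_domRestrict, hs, map_minorMap_span] at hrange
  exact quotient hrange (of_projective _)

end Minors

theorem range_cons_union_pair_zero {A : Type*} [Zero A] {m : ℕ} (x y b₁ b₂ : A)
    (u v : Fin m → A) :
    Set.range (Fin.cons (x, y) fun j => (u j, v j) : Fin (m + 1) → A × A) ∪ {(0, b₁), (0, b₂)} =
      insert (x, y) (Set.range fun j : Fin (m + 2) =>
        ((Fin.cons 0 (Fin.cons 0 u : Fin (m + 1) → A) : Fin (m + 2) → A) j,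
          (Fin.cons b₁ (Fin.cons b₂ v : Fin (m + 1) → A) : Fin (m + 2) → A) j)) := by
  rw [Fin.range_cons]
  ext z
  simp only [Set.mem_insert_iff, Set.mem_union, Set.mem_range, Fin.exists_fin_succ (n := m + 1),
    Fin.exists_fin_succ (n := m), Fin.cons_zero, Fin.cons_succ, Set.mem_singleton_iff]
  grind

theorem stmt10_general {K : Type u} [Field K] {σ : Type} {m : ℕ} (hm : 1 ≤ m)
    {x y b₁ b₂ : MvPolynomial σ K} (hx : x.IsHomogeneous 1) (hy : y.IsHomogeneous 1)
    (hb₁ : b₁.IsHomogeneous 1) (hb₂ : b₂.IsHomogeneous 1) (hxy : LinearIndependent K ![x, y])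
    {u v : Fin m → MvPolynomial σ K} (hu : ∀ j, (u j).IsHomogeneous 1)
    (hv : ∀ j, (v j).IsHomogeneous 1) :
    projDim (MvPolynomial σ K) (MvPolynomial σ K ⧸
      repByMinors x y (Fin.cons 0 (Fin.cons 0 u)) (Fin.cons b₁ (Fin.cons b₂ v))) ≤
      ((2 * (m + 2) - 2 : ℕ) : ℕ∞) := by
  obtain ⟨k, rfl⟩ := Nat.exists_eq_add_of_le' hm
  have hc : Set.range (Fin.cons (x, y) fun j => (u j, v j)) ⊆
      (linearColumns K σ : Set (MvPolynomial σ K × MvPolynomial σ K)) := by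
    rw [Fin.range_cons, Set.insert_subset_iff, Set.range_subset_iff]
    exact ⟨⟨hx, hy⟩, fun j => ⟨hu j, hv j⟩⟩
  have hcoker := hasPdLE_coker_union_pair hb₁ hb₂ hc
  rw [range_cons_union_pair_zero] at hcoker
  obtain ⟨hprime, hdvd⟩ := prime_and_not_dvd hx hy hxy
  exact (hcoker.quotient_repByMinors hprime hdvd).projDim_le

/-- with `n = m + 2 ≥ 3`, if `I` is generated by `n` quadrics represented
by minors by `M = [[x, 0, 0, a₁₃, …, a₁ₙ], [y, a₂₁, a₂₂, a₂₃, …, a₂ₙ]]`, where all entries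
are linear forms or zero and `ht (x, y) = 2`, then `pd(R/I) ≤ 2n - 2`. -/
theorem stmt10 (K : Type u) [Field K] [IsAlgClosed K] (N m : ℕ) (hm : 1 ≤ m)
    (x y b₁ b₂ : MvPolynomial (Fin N) K) (hx : x.IsHomogeneous 1) (hy : y.IsHomogeneous 1)
    (hb₁ : b₁.IsHomogeneous 1) (hb₂ : b₂.IsHomogeneous 1)
    (hxy : LinearIndependent K ![x, y])
    (hht : idealHeight (Ideal.span {x, y}) = 2)
    (u v : Fin m → MvPolynomial (Fin N) K)
    (hu : ∀ j, (u j).IsHomogeneous 1) (hv : ∀ j, (v j).IsHomogeneous 1)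
    (I : Ideal (MvPolynomial (Fin N) K))
    (hI : I = repByMinors x y (Fin.cons 0 (Fin.cons 0 u)) (Fin.cons b₁ (Fin.cons b₂ v))) :
    projDim (MvPolynomial (Fin N) K) (MvPolynomial (Fin N) K ⧸ I) ≤ ((2 * (m + 2) - 2 : ℕ) : ℕ∞) := by
  subst hI
  exact stmt10_general hm hx hy hb₁ hb₂ hxy hu hv
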